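/- Let N be a finite-dimensional complex subspace of the space of (equivalence classes modulo a.e. equality of) locally integrable functions on [1, +∞) with the property that for every λ > 1, the map S_λ defined by (S_λ w)(r) = w(λr) for r ≥ 1 sends N into N. Then there exist a finite index set I, complex numbers (α_i)_{i∈I} and natural numbers (p_i)_{i∈I} such that N is the linear span of the functions r ↦ (log r)^j · r^{α_i} for i ∈ I and 0 ≤ j ≤ p_i − 1, where r^{α} := exp(α log r) for complex α. -/

import Mathlib

open MeasureTheory Set

noncomputable section

/-- The measure used to identify functions a.e. on `[1, +∞)`. -/
def μIci : Measure ℝ := volume.restrict (Ici (1 : ℝ))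

open Filter Topology

lemma ae_one_lt : ∀ᵐ x ∂μIci, 1 < x := by
  have h1 : ∀ᵐ x ∂(volume : Measure ℝ), x ≠ 1 := by simp [ae_iff, measure_singleton]
  refine (ae_restrict_iff' measurableSet_Ici).2 ?_
  filter_upwards [h1] with x hx hmem using lt_of_le_of_ne hmem hx.symm

/-- The integrand `r ↦ f r / r`, cut off to `[1, ∞)`. -/
def logIntegrand (f : ℝ → ℂ) : ℝ → ℂ := (Ici (1 : ℝ)).indicator fun r => f r / r

/-- The primitive of `f` with respect to `dr / r`, vanishing at `1`. -/
def logPrimitive (f : ℝ → ℂ) (x : ℝ) : ℂ := ∫ r in (1 : ℝ)..x, logIntegrand f r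

lemma logIntegrand_congr {f g : ℝ → ℂ} (h : f =ᵐ[μIci] g) :
    logIntegrand f =ᵐ[volume] logIntegrand g := by
  have h' := (ae_restrict_iff' measurableSet_Ici).1 h
  filter_upwards [h'] with x hx
  by_cases hx1 : x ∈ Ici (1 : ℝ)
  · simp [logIntegrand, hx1, hx hx1]
  · simp [logIntegrand, hx1]

lemma logPrimitive_congr {f g : ℝ → ℂ} (h : f =ᵐ[μIci] g) : logPrimitive f = logPrimitive g := by
  funext x
  exact intervalIntegral.integral_congr_ae
    ((logIntegrand_congr h).mono fun _ hy _ => hy)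

lemma locallyIntegrable_logIntegrand {f : ℝ → ℂ} (hf : ∀ b : ℝ, IntegrableOn f (Icc 1 b) volume) :
    LocallyIntegrable (logIntegrand f) volume := by
  rw [MeasureTheory.locallyIntegrable_iff]
  intro K hK
  obtain ⟨b, hb⟩ := hK.bddAbove
  have hcont : ContinuousOn (fun r : ℝ => ((r : ℂ))⁻¹) (Icc 1 b) := by
    refine ContinuousOn.inv₀ (by fun_prop) fun r hr => ?_
    exact_mod_cast (zero_lt_one.trans_le hr.1).ne'
  have h1 : IntegrableOn (fun r => f r / r) (Icc 1 b) volume := by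
    simpa only [div_eq_mul_inv] using (hf b).mul_continuousOn hcont isCompact_Icc
  rw [logIntegrand, IntegrableOn, MeasureTheory.integrable_indicator_iff measurableSet_Ici,
    IntegrableOn, Measure.restrict_restrict measurableSet_Ici]
  exact h1.mono_set fun x hx => ⟨hx.1, hb hx.2⟩

lemma MeasureTheory.LocallyIntegrable.intervalIntegrable {f : ℝ → ℂ}
    (hf : LocallyIntegrable f volume) (a b : ℝ) : IntervalIntegrable f volume a b :=
  intervalIntegrable_iff.2 <|
    (hf.integrableOn_isCompact isCompact_uIcc).mono_set uIoc_subset_uIcc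

lemma logPrimitive_add {f g : ℝ → ℂ} (hf : LocallyIntegrable (logIntegrand f) volume)
    (hg : LocallyIntegrable (logIntegrand g) volume) :
    logPrimitive (f + g) = logPrimitive f + logPrimitive g := by
  funext x
  have h : logIntegrand (f + g) = fun r => logIntegrand f r + logIntegrand g r := by
    funext r
    simp only [logIntegrand, Set.indicator]
    split_ifs <;> simp [add_div]
  simp only [logPrimitive, Pi.add_apply, h]
  exact intervalIntegral.integral_add (hf.intervalIntegrable _ _) (hg.intervalIntegrable _ _)

lemma logPrimitive_smul (c : ℂ) (f : ℝ → ℂ) :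
    logPrimitive (c • f) = c • logPrimitive f := by
  funext x
  have h : logIntegrand (c • f) = fun r => c • logIntegrand f r := by
    funext r
    simp only [logIntegrand, Set.indicator]
    split_ifs <;> simp [mul_div_assoc]
  simp only [logPrimitive, Pi.smul_apply, h]
  exact intervalIntegral.integral_smul _ _

lemma logPrimitive_mul {f : ℝ → ℂ} (hf : LocallyIntegrable (logIntegrand f) volume)
    {c x : ℝ} (hc : 1 ≤ c) (hx : 1 ≤ x) :
    logPrimitive f (c * x) = logPrimitive f c + logPrimitive (fun r => f (c * r)) x := by
  have hc0 : c ≠ 0 := (zero_lt_one.trans_le hc).ne'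
  have h1 : logPrimitive (fun r => f (c * r)) x = ∫ r in (1 : ℝ)..x, c • logIntegrand f (c * r) := by
    refine intervalIntegral.integral_congr fun r hr => ?_
    rw [uIcc_of_le hx] at hr
    have hr1 : (1 : ℝ) ≤ r := hr.1
    have hcr : (1 : ℝ) ≤ c * r := one_le_mul_of_one_le_of_one_le hc hr1
    have hc0' : (c : ℂ) ≠ 0 := by exact_mod_cast hc0
    have hr0' : (r : ℂ) ≠ 0 := by exact_mod_cast (zero_lt_one.trans_le hr1).ne'
    simp only [logIntegrand, mem_Ici, hr1, hcr, indicator_of_mem, Complex.real_smul]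
    push_cast
    field_simp
  rw [h1, intervalIntegral.integral_smul, intervalIntegral.integral_comp_mul_left _ hc0,
    smul_inv_smul₀ hc0, mul_one]
  exact (intervalIntegral.integral_add_adjacent_intervals (hf.intervalIntegrable _ _)
    (hf.intervalIntegrable _ _)).symm

lemma continuous_logPrimitive {f : ℝ → ℂ} (hf : LocallyIntegrable (logIntegrand f) volume) :
    Continuous (logPrimitive f) :=
  intervalIntegral.continuous_primitive hf.intervalIntegrable 1

lemma hasDerivAt_logPrimitive {f : ℝ → ℂ} (hf : LocallyIntegrable (logIntegrand f) volume)
    (hc : ContinuousOn f (Ioi 1)) {x : ℝ} (hx : 1 < x) :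
    HasDerivAt (logPrimitive f) (f x / x) x := by
  have hEq : logIntegrand f =ᶠ[𝓝 x] fun r => f r / r := by
    filter_upwards [Ioi_mem_nhds hx] with r hr
    simp [logIntegrand, (le_of_lt hr : (1 : ℝ) ≤ r)]
  have hcont : ContinuousAt (fun r : ℝ => f r / r) x := by
    refine (hc.continuousAt (Ioi_mem_nhds hx)).div (by fun_prop) ?_
    exact_mod_cast (zero_lt_one.trans hx).ne'
  have := intervalIntegral.integral_hasDerivAt_right (hf.intervalIntegrable 1 x)
    ⟨univ, univ_mem, hf.aestronglyMeasurable.restrict⟩ (hcont.congr hEq.symm)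
  rwa [hEq.eq_of_nhds] at this

lemma ae_hasDerivAt_logPrimitive {f : ℝ → ℂ} (hf : LocallyIntegrable (logIntegrand f) volume) :
    ∀ᵐ x ∂μIci, 1 < x ∧ HasDerivAt (logPrimitive f) (f x / x) x := by
  filter_upwards [ae_restrict_of_ae (_root_.LocallyIntegrable.ae_hasDerivAt_integral hf),
    ae_one_lt] with x hx hx1
  have := hx 1
  rw [logIntegrand, indicator_of_mem (mem_Ici.2 hx1.le)] at this
  exact ⟨hx1, this⟩

/-- Solutions of Euler-type equations `(x d/dx - α)ᵏ u = 0` are combinations of `(log x)ʲ x^α`. -/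
lemma exists_coeff_of_sub_smul_pow_eq_zero {E : Type*} [AddCommGroup E] [Module ℂ E]
    (D : Module.End ℂ E) (Φ : E →ₗ[ℂ] ℝ → ℂ)
    (hΦ : ∀ v x, 1 < x → HasDerivAt (Φ v) (Φ (D v) x / x) x) (α : ℂ) (k : ℕ) (v : E)
    (hv : ((D - α • (1 : Module.End ℂ E)) ^ k) v = 0) :
    ∃ c : ℕ → ℂ, ∀ x : ℝ, 1 < x → Φ v x =
      ∑ j ∈ Finset.range k, c j * ((Real.log x : ℂ) ^ j * Complex.exp (α * Real.log x)) := by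
  induction k generalizing v with
  | zero =>
    have hv0 : v = 0 := by simpa using hv
    exact ⟨0, by simp [hv0]⟩
  | succ k ih =>
    obtain ⟨c, hc⟩ := ih ((D - α • (1 : Module.End ℂ E)) v) (by
      simpa only [pow_succ, Module.End.mul_apply] using hv)
    have hlog : ∀ x : ℝ, 1 < x → HasDerivAt (fun x : ℝ => (Real.log x : ℂ)) ((x : ℂ)⁻¹) x := by
      intro x hx
      simpa using (Real.hasDerivAt_log (zero_lt_one.trans hx).ne').ofReal_comp
    let h : ℝ → ℂ := fun x => Φ v x * Complex.exp (-α * Real.log x) -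
      ∑ j ∈ Finset.range k, c j / (j + 1) * (Real.log x : ℂ) ^ (j + 1)
    have hexp : ∀ x : ℝ, Complex.exp (α * Real.log x) * Complex.exp (-α * Real.log x) = 1 := by
      intro x
      rw [← Complex.exp_add]
      simp
    have hder : ∀ x : ℝ, 1 < x → HasDerivAt h 0 x := by
      intro x hx
      have h1 := (hΦ v x hx).mul (((hlog x hx).const_mul (-α)).cexp)
      have h2 : HasDerivAt
          (fun x : ℝ => ∑ j ∈ Finset.range k, c j / (j + 1) * (Real.log x : ℂ) ^ (j + 1))
          (∑ j ∈ Finset.range k, c j * (Real.log x : ℂ) ^ j * (x : ℂ)⁻¹) x := by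
        refine HasDerivAt.fun_sum fun j _ => ?_
        refine (((hlog x hx).fun_pow (j + 1)).const_mul (c j / (j + 1))).congr_deriv ?_
        have : (j : ℂ) + 1 ≠ 0 := Nat.cast_add_one_ne_zero j
        push_cast
        field_simp
      refine (h1.sub h2).congr_deriv ?_
      have hc' : Φ (D v) x = α * Φ v x + ∑ j ∈ Finset.range k,
          c j * ((Real.log x : ℂ) ^ j * Complex.exp (α * Real.log x)) := by
        rw [← hc x hx]
        simp
      have hs : (∑ j ∈ Finset.range k, c j * ((Real.log x : ℂ) ^ j *
          Complex.exp (α * Real.log x))) * Complex.exp (-α * Real.log x) =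
          ∑ j ∈ Finset.range k, c j * (Real.log x : ℂ) ^ j := by
        rw [Finset.sum_mul]
        refine Finset.sum_congr rfl fun j _ => ?_
        rw [mul_assoc, mul_assoc, hexp, mul_one]
      rw [← Finset.sum_mul, ← hs, hc']
      ring
    obtain ⟨a, ha⟩ := isOpen_Ioi.exists_is_const_of_deriv_eq_zero (isPreconnected_Ioi (a := (1:ℝ)))
      (fun x hx => (hder x hx).differentiableAt.differentiableWithinAt)
      (fun x hx => (hder x hx).deriv)
    refine ⟨fun j => if j = 0 then a else c (j - 1) / j, fun x hx => ?_⟩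
    have hax : Φ v x * Complex.exp (-α * Real.log x) = a +
        ∑ j ∈ Finset.range k, c j / (j + 1) * (Real.log x : ℂ) ^ (j + 1) := by
      rw [← ha x hx]
      simp [h]
    calc Φ v x = Φ v x * Complex.exp (-α * Real.log x) * Complex.exp (α * Real.log x) := by
          rw [mul_assoc, mul_comm (Complex.exp _), hexp, mul_one]
      _ = _ := by
          rw [hax, Finset.sum_range_succ', add_mul, Finset.sum_mul, add_comm]
          simp [mul_assoc]

section Representatives

variable {E : Type*} [AddCommGroup E] [Module ℂ E] {ι : E →ₗ[ℂ] ℝ →ₘ[μIci] ℂ}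

/-- `logPrimitive` as a linear map on a space mapped by `ι` into locally integrable functions. -/
def logPrimitiveₗ (hloc : ∀ (w : E) (b : ℝ), IntegrableOn (ι w) (Icc 1 b) volume) :
    E →ₗ[ℂ] ℝ → ℂ where
  toFun w := logPrimitive (ι w)
  map_add' v w := by
    rw [map_add, ← logPrimitive_add (locallyIntegrable_logIntegrand (hloc v))
      (locallyIntegrable_logIntegrand (hloc w))]
    exact logPrimitive_congr (AEEqFun.coeFn_add _ _)
  map_smul' c w := by
    rw [map_smul, RingHom.id_apply, ← logPrimitive_smul]
    exact logPrimitive_congr (AEEqFun.coeFn_smul _ _)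

lemma exists_ae_eq_logPrimitive_add_const [FiniteDimensional ℂ E]
    (hloc : ∀ (w : E) (b : ℝ), IntegrableOn (ι w) (Icc 1 b) volume)
    (hstab : ∀ lam : ℝ, 1 < lam → ∀ w : E,
      ∃ w' : E, ι w' =ᵐ[μIci] fun r : ℝ => ι w (lam * r))
    (w : E) : ∃ (w' : E) (a : ℂ), ι w =ᵐ[μIci]
      fun x => logPrimitiveₗ hloc w' x + a := by
  have hw := locallyIntegrable_logIntegrand (hloc w)
  let X : Set ℝ := {x | 1 < x ∧ HasDerivAt (logPrimitive (ι w)) (ι w x / x) x}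
  let L : E × ℂ →ₗ[ℂ] X → ℂ := LinearMap.coprod
    ((LinearMap.funLeft ℂ ℂ ((↑) : X → ℝ)).comp (logPrimitiveₗ hloc))
    ((LinearMap.id : ℂ →ₗ[ℂ] ℂ).smulRight (fun _ : X => (1 : ℂ)))
  have hL : ∀ v a x, L (v, a) x = logPrimitiveₗ hloc v x + a := by
    intro v a x
    simp [L, LinearMap.funLeft]
  have hclosed : IsClosed (LinearMap.range L : Set (X → ℂ)) :=
    Submodule.closed_of_finiteDimensional _
  have hlim : Tendsto (fun (c : ℝ) (x : X) => (c - 1)⁻¹ •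
      (logPrimitive (ι w) (c * x) - logPrimitive (ι w) x))
      (𝓝[>] 1) (𝓝 fun x : X => ι w x) := by
    rw [tendsto_pi_nhds]
    rintro ⟨x, hx1, hx⟩
    have hx0 : (x : ℂ) ≠ 0 := by exact_mod_cast (zero_lt_one.trans hx1).ne'
    have h1 : HasDerivAt (fun c : ℝ => logPrimitive (ι w) (c * x)) (ι w x) 1 := by
      have h2 := HasDerivAt.scomp (h := fun c : ℝ => c * x) (1 : ℝ)
        (by rwa [one_mul]) ((hasDerivAt_id (1 : ℝ)).mul_const x)
      refine h2.congr_deriv ?_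
      simp only [one_mul, Complex.real_smul]
      field_simp
    have h3 := (hasDerivAt_iff_tendsto_slope.1 h1).mono_left
      (nhdsWithin_mono _ fun c (hc : 1 < c) => hc.ne')
    exact h3.congr fun c => by simp [slope_def_module]
  have hmem : (fun x : X => ι w x) ∈ (LinearMap.range L : Set (X → ℂ)) := by
    refine hclosed.mem_of_tendsto hlim ?_
    filter_upwards [self_mem_nhdsWithin] with c hc
    obtain ⟨w', hww'⟩ := hstab c hc w
    refine ⟨((c - 1 : ℝ) : ℂ)⁻¹ • (w' - w, logPrimitive (ι w) c), ?_⟩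
    funext x
    rw [map_smul, Pi.smul_apply, hL, map_sub, Pi.sub_apply,
      logPrimitive_mul hw (le_of_lt hc) (le_of_lt x.2.1), ← logPrimitive_congr hww']
    simp only [logPrimitiveₗ, LinearMap.coe_mk, AddHom.coe_mk, Complex.real_smul, smul_eq_mul]
    push_cast
    ring
  obtain ⟨⟨w', a⟩, h⟩ := hmem
  refine ⟨w', a, ?_⟩
  filter_upwards [ae_hasDerivAt_logPrimitive hw] with x hx
  rw [← hL w' a ⟨x, hx⟩, h]

/-- Every class in the range of `ι` has a smooth representative, and `x d/dx` acts on these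
representatives. -/
lemma exists_smooth_representatives [FiniteDimensional ℂ E]
    (hloc : ∀ (w : E) (b : ℝ), IntegrableOn (ι w) (Icc 1 b) volume)
    (hstab : ∀ lam : ℝ, 1 < lam → ∀ w : E,
      ∃ w' : E, ι w' =ᵐ[μIci] fun r : ℝ => ι w (lam * r)) :
    ∃ (D : Module.End ℂ E) (Φ : E →ₗ[ℂ] ℝ → ℂ),
      (∀ w : E, ι w =ᵐ[μIci] Φ w) ∧
      ∀ w x, 1 < x → HasDerivAt (Φ w) (Φ (D w) x / x) x := by
  let G : E × ℂ →ₗ[ℂ] ℝ → ℂ := LinearMap.coprod (logPrimitiveₗ hloc)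
    ((LinearMap.id : ℂ →ₗ[ℂ] ℂ).smulRight (fun _ : ℝ => (1 : ℂ)))
  have hG : ∀ v a x, G (v, a) x = logPrimitiveₗ hloc v x + a := by
    intro v a x
    simp [G]
  let P : Submodule ℂ (E × E × ℂ) :=
    { carrier := {q | ι q.1 =ᵐ[μIci] G q.2}
      zero_mem' := by
        simpa using AEEqFun.coeFn_zero
      add_mem' := by
        intro p q hp hq
        simp only [mem_ofPred_eq, Prod.fst_add, Prod.snd_add, map_add] at *
        exact (AEEqFun.coeFn_add _ _).trans (hp.add hq)
      smul_mem' := by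
        intro c p hp
        simp only [mem_ofPred_eq, Prod.smul_fst, Prod.smul_snd, map_smul] at *
        exact (AEEqFun.coeFn_smul _ _).trans (hp.const_smul c) }
  obtain ⟨s, hs⟩ := LinearMap.exists_rightInverse_of_surjective
    ((LinearMap.fst ℂ E (E × ℂ)).comp P.subtype) (by
      rw [LinearMap.range_eq_top]
      intro w
      obtain ⟨w', a, h⟩ := exists_ae_eq_logPrimitive_add_const hloc hstab w
      exact ⟨⟨(w, w', a), h.trans (Eventually.of_forall fun x => (hG w' a x).symm)⟩, rfl⟩)
  have hs' : ∀ w, (s w : E × E × ℂ).1 = w := fun w => LinearMap.congr_fun hs w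
  let T : E →ₗ[ℂ] E × ℂ := (LinearMap.snd ℂ E (E × ℂ)).comp (P.subtype.comp s)
  have hrep : ∀ w : E, ι w =ᵐ[μIci] G (T w) := by
    intro w
    have := (s w).2
    change ι (s w : E × E × ℂ).1 =ᵐ[μIci] G (T w) at this
    rwa [hs' w] at this
  have hGT : ∀ w, G (T w) = fun x => logPrimitive (ι (T w).1) x + (T w).2 :=
    fun w => funext (hG (T w).1 (T w).2)
  have hli : ∀ w : E, LocallyIntegrable (logIntegrand (ι w)) volume :=
    fun w => locallyIntegrable_logIntegrand (hloc w)
  have hcont : ∀ w, Continuous (G (T w)) := by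
    intro w
    rw [hGT]
    exact (continuous_logPrimitive (hli _)).add continuous_const
  refine ⟨(LinearMap.fst ℂ E ℂ).comp T, G.comp T, hrep, fun w x hx => ?_⟩
  simp only [LinearMap.comp_apply, LinearMap.fst_apply]
  rw [hGT w, logPrimitive_congr (hrep (T w).1)]
  refine (hasDerivAt_logPrimitive ?_ (hcont _).continuousOn hx).add_const _
  exact (locallyIntegrable_congr (logIntegrand_congr (hrep (T w).1))).1 (hli _)

end Representatives

lemma sub_smul_pow_finrank_maxGenEigenspace {K E : Type*} [Field K] [AddCommGroup E] [Module K E]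
    [FiniteDimensional K E] (D : Module.End K E) (α : K) {v : E} (hv : v ∈ D.maxGenEigenspace α) :
    ((D - α • (1 : Module.End K E)) ^ Module.finrank K (D.maxGenEigenspace α)) v = 0 := by
  have hmaps : ∀ x ∈ D.maxGenEigenspace α,
      (D - algebraMap K (Module.End K E) α) x ∈ D.maxGenEigenspace α :=
    Module.End.mapsTo_maxGenEigenspace_of_comm
    (Algebra.mul_sub_algebraMap_commutes D α) α
  obtain ⟨m, hm⟩ := Module.End.isNilpotent_restrict_maxGenEigenspace_sub_algebraMap D α hmaps
  have h := Module.End.ker_pow_le_ker_pow_finrank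
    ((D - algebraMap K (Module.End K E) α).restrict hmaps) m
    (show (⟨v, hv⟩ : D.maxGenEigenspace α) ∈ _ by rw [LinearMap.mem_ker, hm]; rfl)
  rw [LinearMap.mem_ker, Module.End.pow_restrict] at h
  simpa [Algebra.algebraMap_eq_smul_one] using congrArg Subtype.val h

/-- The class of `r ↦ (log r)ʲ r^α`. -/
def logPowClass (α : ℂ) (j : ℕ) : ℝ →ₘ[μIci] ℂ :=
  AEEqFun.mk (fun r : ℝ => ((Real.log r : ℝ) : ℂ) ^ j * Complex.exp (α * (Real.log r : ℂ)))
    (by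
      have : Measurable fun r : ℝ =>
        ((Real.log r : ℝ) : ℂ) ^ j * Complex.exp (α * (Real.log r : ℂ)) := by fun_prop
      exact this.aestronglyMeasurable)

lemma coeFn_logPowClass (α : ℂ) (j : ℕ) : (logPowClass α j : ℝ → ℂ) =ᵐ[μIci]
    fun r : ℝ => ((Real.log r : ℝ) : ℂ) ^ j * Complex.exp (α * (Real.log r : ℂ)) :=
  AEEqFun.coeFn_mk _ _

lemma map_maxGenEigenspace_eq_span {E : Type*} [AddCommGroup E] [Module ℂ E]
    [FiniteDimensional ℂ E] {ι : E →ₗ[ℂ] ℝ →ₘ[μIci] ℂ} (hι : Function.Injective ι)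
    {D : Module.End ℂ E} {Φ : E →ₗ[ℂ] ℝ → ℂ}
    (hrep : ∀ w, ι w =ᵐ[μIci] Φ w)
    (hΦ : ∀ w x, 1 < x → HasDerivAt (Φ w) (Φ (D w) x / x) x) (α : ℂ) :
    (D.maxGenEigenspace α).map ι = Submodule.span ℂ (range fun j :
      Fin (Module.finrank ℂ (D.maxGenEigenspace α)) => logPowClass α j) := by
  have : FiniteDimensional ℂ (Submodule.span ℂ (range fun j :
      Fin (Module.finrank ℂ (D.maxGenEigenspace α)) => logPowClass α j)) :=
    FiniteDimensional.span_of_finite ℂ (finite_range _)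
  refine Submodule.eq_of_le_of_finrank_le ?_ ?_
  · rintro _ ⟨v, hv, rfl⟩
    obtain ⟨c, hc⟩ := exists_coeff_of_sub_smul_pow_eq_zero D Φ hΦ α _ v
      (sub_smul_pow_finrank_maxGenEigenspace D α hv)
    have hEq : ι v = ∑ j : Fin (Module.finrank ℂ (D.maxGenEigenspace α)),
        c j • logPowClass α j := by
      refine AEEqFun.ext ?_
      have h1 : ∀ᵐ x ∂μIci, ∀ j : Fin (Module.finrank ℂ (D.maxGenEigenspace α)),
          (logPowClass α j : ℝ → ℂ) x = (Real.log x : ℂ) ^ (j : ℕ) *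
            Complex.exp (α * Real.log x) :=
        ae_all_iff.2 fun j => coeFn_logPowClass α j
      have h2 : ∀ᵐ x ∂μIci, ∀ j : Fin (Module.finrank ℂ (D.maxGenEigenspace α)),
          ((c j • logPowClass α j : ℝ →ₘ[μIci] ℂ) : ℝ → ℂ) x = c j • logPowClass α j x :=
        ae_all_iff.2 fun j => AEEqFun.coeFn_smul _ _
      filter_upwards [hrep v, ae_one_lt, h1, h2, AEEqFun.coeFn_finsetSum Finset.univ
        (fun j : Fin (Module.finrank ℂ (D.maxGenEigenspace α)) => c j • logPowClass α j)]
        with x hx hx1 h1 h2 h3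
      rw [hx, hc x hx1, h3]
      simp [h2, h1, Finset.sum_range]
    rw [hEq]
    exact Submodule.sum_mem _ fun j _ =>
      Submodule.smul_mem _ _ (Submodule.subset_span (mem_range_self j))
  · rw [(Submodule.equivMapOfInjective ι hι (D.maxGenEigenspace α)).symm.finrank_eq]
    simpa [Set.finrank] using finrank_range_le_card (R := ℂ) fun j :
      Fin (Module.finrank ℂ (D.maxGenEigenspace α)) => logPowClass α j

/-- A finite-dimensional space `N` of (a.e.-classes of) locally integrable
functions on `[1, ∞)` which is stable by all the dilation/restriction operators
`(S_λ w)(r) = w(λ r)`, `λ > 1`, is spanned by functions of the form `r ↦ (log r)ʲ r^α`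
(with `r^α = exp(α log r)` for complex `α`). -/
theorem finiteDim_dilation_invariant_span
    (N : Submodule ℂ (ℝ →ₘ[μIci] ℂ))
    (hfin : FiniteDimensional ℂ N)
    (hloc : ∀ w : ℝ →ₘ[μIci] ℂ, w ∈ N → ∀ b : ℝ, IntegrableOn (w : ℝ → ℂ) (Icc 1 b) volume)
    (hstab : ∀ lam : ℝ, 1 < lam → ∀ w : ℝ →ₘ[μIci] ℂ, w ∈ N →
      ∃ w' ∈ N, (w' : ℝ → ℂ) =ᵐ[μIci] fun r : ℝ => (w : ℝ → ℂ) (lam * r)) :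
    ∃ (n : ℕ) (α : Fin n → ℂ) (p : Fin n → ℕ),
      N = Submodule.span ℂ
        {w : ℝ →ₘ[μIci] ℂ | ∃ (i : Fin n) (j : ℕ), j < p i ∧
          (w : ℝ → ℂ) =ᵐ[μIci]
            fun r : ℝ => ((Real.log r : ℝ) : ℂ) ^ j * Complex.exp (α i * (Real.log r : ℂ))} := by
  let : AddCommGroup N := Module.addCommMonoidToAddCommGroup ℂ
  have : FiniteDimensional ℂ N := hfin
  obtain ⟨D, Φ, hrep, hΦ⟩ := exists_smooth_representatives (ι := N.subtype)
    (fun w => hloc w w.2) (fun c hc w => by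
      obtain ⟨w', hw', h⟩ := hstab c hc w w.2
      exact ⟨⟨w', hw'⟩, h⟩)
  have hspan := map_maxGenEigenspace_eq_span N.injective_subtype hrep hΦ
  have hfinite : {α | D.maxGenEigenspace α ≠ ⊥}.Finite :=
    WellFoundedGT.finite_ne_bot_of_iSupIndep D.independent_maxGenEigenspace
  let e := hfinite.toFinset.equivFin.symm
  refine ⟨_, fun i => e i, fun i => Module.finrank ℂ (D.maxGenEigenspace (e i)), ?_⟩
  apply le_antisymm
  · intro w hw
    have hmem : (⟨w, hw⟩ : N) ∈ ⨆ α, D.maxGenEigenspace α := by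
      rw [Module.End.iSup_maxGenEigenspace_eq_top]
      trivial
    refine Submodule.iSup_induction _ (motive := fun v : N => (v : ℝ →ₘ[μIci] ℂ) ∈ _) hmem
      (fun α v hv => ?_) (Submodule.zero_mem _) fun v v' hv hv' => Submodule.add_mem _ hv hv'
    by_cases hα : D.maxGenEigenspace α = ⊥
    · rw [hα, Submodule.mem_bot] at hv
      simp [hv]
    · obtain ⟨i, rfl⟩ : ∃ i, (e i : ℂ) = α :=
        (e.surjective ⟨α, hfinite.mem_toFinset.2 hα⟩).imp fun _ => congrArg Subtype.val
      have hv' : (v : ℝ →ₘ[μIci] ℂ) ∈ (D.maxGenEigenspace (e i : ℂ)).map N.subtype :=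
        ⟨v, hv, rfl⟩
      rw [hspan] at hv'
      refine Submodule.span_mono ?_ hv'
      rintro _ ⟨j, rfl⟩
      exact ⟨i, j, j.2, coeFn_logPowClass _ j⟩
  · rw [Submodule.span_le]
    rintro w ⟨i, j, hj, hw⟩
    have hwj : w = logPowClass (e i) j := AEEqFun.ext (hw.trans (coeFn_logPowClass _ j).symm)
    have : w ∈ (D.maxGenEigenspace (e i : ℂ)).map N.subtype := by
      rw [hspan, hwj]
      exact Submodule.subset_span ⟨⟨j, hj⟩, rfl⟩
    obtain ⟨v, -, rfl⟩ := this
    exact v.2
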